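/- Let G be a finite simple graph. Then š(G) = 2 if and only if G is a non-regular graph that is the union of two edge-disjoint regular Class 1 graphs H₁ and H₂ satisfying V(H₁) ⊆ V(H₂); that is, there exist subgraphs H₁ and H₂ of G with V(H₁) ⊆ V(H₂) = V(G), E(H₁) ∩ E(H₂) = ∅, E(G) = E(H₁) ∪ E(H₂), such that each Hᵢ is regular and has chromatic index equal to its maximum degree. -/

import Mathlib

open SimpleGraph Finset

/-- A proper edge coloring of `G` with colors in `ℕ`: distinct edges of `G`
sharing an endpoint receive distinct colors. -/
def IsProperEdgeColoring {V : Type*} (G : SimpleGraph V) (c : Sym2 V → ℕ) : Prop :=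
  ∀ e₁ ∈ G.edgeSet, ∀ e₂ ∈ G.edgeSet, e₁ ≠ e₂ → (∃ v, v ∈ e₁ ∧ v ∈ e₂) → c e₁ ≠ c e₂

/-- The palette of a vertex `v`: the set of colors appearing on edges of `G` incident with `v`. -/
def palette {V : Type*} (G : SimpleGraph V) (c : Sym2 V → ℕ) (v : V) : Set ℕ :=
  {n | ∃ e ∈ G.edgeSet, v ∈ e ∧ c e = n}

/-- The palette index of `G`: the minimum number of distinct palettes occurring in a
proper edge coloring of `G`. -/
noncomputable def paletteIndex {V : Type*} (G : SimpleGraph V) : ℕ :=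
  sInf {k | ∃ c : Sym2 V → ℕ, IsProperEdgeColoring G c ∧ (Set.range (palette G c)).ncard = k}


lemma pal_mem {V : Type*} (G : SimpleGraph V) (c : Sym2 V → ℕ) (v : V) (n : ℕ) :
    n ∈ palette G c v ↔ ∃ w, G.Adj v w ∧ c s(v, w) = n := by
  constructor
  · rintro ⟨e, he, hv, rfl⟩
    obtain ⟨w, rfl⟩ := hv
    exact ⟨w, by simpa using he, rfl⟩
  · rintro ⟨w, hw, rfl⟩
    exact ⟨s(v, w), by simpa using hw, by simp, rfl⟩

lemma sub_injOn {V : Type*} (E : Set (Sym2 V)) (c : Sym2 V → ℕ)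
    (h : ∀ e₁ ∈ E, ∀ e₂ ∈ E, e₁ ≠ e₂ → (∃ v, v ∈ e₁ ∧ v ∈ e₂) → c e₁ ≠ c e₂)
    (v : V) (N : Set V) (hN : ∀ w ∈ N, s(v, w) ∈ E) :
    Set.InjOn (fun w => c s(v, w)) N := by
  intro a ha b hb hab
  by_contra hne
  exact h _ (hN a ha) _ (hN b hb) (fun h => hne (Sym2.congr_right.1 h)) ⟨v, by simp, by simp⟩ hab

lemma pal_eq_image {V : Type*} (G : SimpleGraph V) (c : Sym2 V → ℕ) (v : V) :
    palette G c v = (fun w => c s(v, w)) '' G.neighborSet v := by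
  ext n
  rw [pal_mem]
  simp

lemma pal_ncard {V : Type*} [Fintype V] (G : SimpleGraph V) [DecidableRel G.Adj]
    (c : Sym2 V → ℕ) (hc : IsProperEdgeColoring G c) (v : V) :
    (palette G c v).ncard = G.degree v := by
  rw [pal_eq_image, Set.ncard_image_of_injOn
    (sub_injOn G.edgeSet c hc v _ (fun w hw => by simpa using hw)),
    ← G.card_neighborSet_eq_degree, Set.ncard_eq_toFinset_card', Set.toFinset_card]

lemma pal_finite {V : Type*} [Fintype V] (G : SimpleGraph V)
    (c : Sym2 V → ℕ) (v : V) : (palette G c v).Finite := by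
  rw [pal_eq_image]
  exact Set.toFinite _

lemma exists_inj (S T : Set ℕ) (hS : S.Finite) (hT : T.Finite) (h : S.ncard ≤ T.ncard) :
    ∃ f : ℕ → ℕ, (∀ n ∈ S, f n ∈ T) ∧ Set.InjOn f S := by
  obtain ⟨f, hf, hi⟩ := hS.exists_injOn_of_encard_le (t := T)
    (by rw [← hS.cast_ncard_eq, ← hT.cast_ncard_eq]; exact_mod_cast h)
  exact ⟨f, fun n hn => hf hn, hi⟩

/-- recolouring -/
lemma recolor (A B : Set ℕ) (hA : A.Finite) (hB : B.Finite) (h : A.ncard ≤ B.ncard) :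
    ∃ g : ℕ → ℕ, Set.InjOn g A ∧ (∀ n ∈ A, g n ∈ B) ∧ (∀ n ∈ B, g n = n) := by
  classical
  obtain ⟨f, hf, hi⟩ := exists_inj (A \ B) (B \ A) hA.diff hB.diff (by
    have h1 := Set.ncard_inter_add_ncard_diff_eq_ncard A B hA
    have h2 := Set.ncard_inter_add_ncard_diff_eq_ncard B A hB
    rw [Set.inter_comm] at h2
    omega)
  refine ⟨fun n => if n ∈ B then n else f n, ?_, ?_, ?_⟩
  · intro a ha b hb hab
    by_cases h1 : a ∈ B <;> by_cases h2 : b ∈ B <;> simp only [h1, h2, if_true, if_false] at hab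
    · exact hab
    · exact absurd (hab ▸ ha) (hf b ⟨hb, h2⟩).2
    · exact absurd (hab ▸ hb) (hf a ⟨ha, h1⟩).2
    · exact hi ⟨ha, h1⟩ ⟨hb, h2⟩ hab
  · intro n hn
    by_cases h1 : n ∈ B
    · simpa [h1] using h1
    · simpa [h1] using (hf n ⟨hn, h1⟩).1
  · intro n hn
    simp [hn]

lemma pal_comp {V : Type*} (G : SimpleGraph V) (c : Sym2 V → ℕ) (g : ℕ → ℕ) (v : V) :
    palette G (fun e => g (c e)) v = g '' palette G c v := by
  ext n
  simp only [pal_mem, Set.mem_image]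
  constructor
  · rintro ⟨w, hw, rfl⟩
    exact ⟨_, ⟨w, hw, rfl⟩, rfl⟩
  · rintro ⟨_, ⟨w, hw, rfl⟩, rfl⟩
    exact ⟨w, hw, rfl⟩

lemma recolor_graph {V : Type*} [Fintype V] (G : SimpleGraph V) (c : Sym2 V → ℕ)
    (hc : IsProperEdgeColoring G c) (hr : (Set.range (palette G c)).ncard = 2) :
    ∃ (c' : Sym2 V → ℕ) (A B : Set ℕ) (a b : V), IsProperEdgeColoring G c' ∧ A ⊆ B ∧
      palette G c' a = A ∧ palette G c' b = B ∧
      ∀ v, palette G c' v = A ∨ palette G c' v = B := by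
  obtain ⟨A, B, hAB, hrange⟩ := Set.ncard_eq_two.1 hr
  wlog hle : A.ncard ≤ B.ncard generalizing A B
  · exact this B A hAB.symm (by rw [hrange, Set.pair_comm]) (by omega)
  obtain ⟨a, ha⟩ : A ∈ Set.range (palette G c) := by rw [hrange]; simp
  obtain ⟨b, hb⟩ : B ∈ Set.range (palette G c) := by rw [hrange]; simp
  have hall : ∀ v, palette G c v = A ∨ palette G c v = B := by
    intro v
    have : palette G c v ∈ Set.range (palette G c) := ⟨v, rfl⟩
    rw [hrange] at this
    simpa using this
  obtain ⟨g, g1, g2, g3⟩ := recolor A B (ha ▸ pal_finite G c a) (hb ▸ pal_finite G c b) hle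
  have gB : g '' B = B := by
    ext n
    constructor
    · rintro ⟨m, hm, rfl⟩
      rwa [g3 m hm]
    · intro hn
      exact ⟨n, hn, g3 n hn⟩
  refine ⟨fun e => g (c e), g '' A, B, a, b, ?_, ?_, ?_, ?_, ?_⟩
  · rintro e₁ h1 e₂ h2 hne ⟨v, hv1, hv2⟩ heq
    apply hc e₁ h1 e₂ h2 hne ⟨v, hv1, hv2⟩
    have m1 : c e₁ ∈ palette G c v := ⟨e₁, h1, hv1, rfl⟩
    have m2 : c e₂ ∈ palette G c v := ⟨e₂, h2, hv2, rfl⟩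
    rcases hall v with h | h <;> rw [h] at m1 m2
    · exact g1 m1 m2 heq
    · simpa [g3 _ m1, g3 _ m2] using heq
  · rintro _ ⟨n, hn, rfl⟩
    exact g2 n hn
  · rw [pal_comp, ha]
  · rw [pal_comp, hb, gB]
  · intro v
    rw [pal_comp]
    rcases hall v with h | h <;> rw [h]
    · exact Or.inl rfl
    · exact Or.inr gB

/-- subgraph cut out by a colour set -/
def colSub {V : Type*} (G : SimpleGraph V) (c : Sym2 V → ℕ) (S : Set ℕ) (W : Set V)
    (h : ∀ u v, G.Adj u v → c s(u, v) ∈ S → u ∈ W) : G.Subgraph where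
  verts := W
  Adj u v := G.Adj u v ∧ c s(u, v) ∈ S
  adj_sub h := h.1
  edge_vert h' := h _ _ h'.1 h'.2
  symm := ⟨fun u v h => ⟨h.1.symm, by rw [Sym2.eq_swap]; exact h.2⟩⟩

lemma colSub_edge {V : Type*} (G : SimpleGraph V) (c : Sym2 V → ℕ) (S : Set ℕ) (W : Set V)
    (h) (e : Sym2 V) : e ∈ (colSub G c S W h).edgeSet ↔ e ∈ G.edgeSet ∧ c e ∈ S := by
  induction e with
  | _ u v => simp [colSub]

lemma colSub_deg {V : Type*} (G : SimpleGraph V) (c : Sym2 V → ℕ) (S : Set ℕ) (W : Set V)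
    (h) (hc : IsProperEdgeColoring G c) (v : V) (hv : S ⊆ palette G c v) :
    ((colSub G c S W h).neighborSet v).ncard = S.ncard := by
  rw [← Set.ncard_image_of_injOn (sub_injOn G.edgeSet c hc v
    ((colSub G c S W h).neighborSet v) (fun w hw => by simpa using hw.1))]
  congr 1
  ext n
  constructor
  · rintro ⟨w, hw, rfl⟩
    exact hw.2
  · intro hn
    obtain ⟨w, hw, rfl⟩ := (pal_mem G c v n).1 (hv hn)
    exact ⟨w, ⟨hw, hn⟩, rfl⟩

lemma colSub_col {V : Type*} (G : SimpleGraph V) (c : Sym2 V → ℕ) (S : Set ℕ) (W : Set V)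
    (h) (hc : IsProperEdgeColoring G c) (hS : S.Finite) :
    ∃ c' : Sym2 V → ℕ, (∀ e ∈ (colSub G c S W h).edgeSet, c' e < S.ncard) ∧
            ∀ e₁ ∈ (colSub G c S W h).edgeSet, ∀ e₂ ∈ (colSub G c S W h).edgeSet,
              e₁ ≠ e₂ → (∃ v, v ∈ e₁ ∧ v ∈ e₂) → c' e₁ ≠ c' e₂ := by
  obtain ⟨f, hf, hi⟩ := exists_inj S (Set.Iio S.ncard) hS (Set.finite_Iio _) (by
    rw [Set.ncard_eq_toFinset_card' (Set.Iio _)]; simp)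
  simp only [colSub_edge]
  refine ⟨fun e => f (c e), fun e he => hf _ he.2, ?_⟩
  intro e₁ h1 e₂ h2 hne hv heq
  exact hc e₁ h1.1 e₂ h2.1 hne hv (hi h1.2 h2.2 heq)

lemma full_image {V : Type*} [Fintype V] (G : SimpleGraph V) (H : G.Subgraph) (d : ℕ)
    (c : Sym2 V → ℕ) (h1 : ∀ e ∈ H.edgeSet, c e < d)
    (h2 : ∀ e₁ ∈ H.edgeSet, ∀ e₂ ∈ H.edgeSet,
              e₁ ≠ e₂ → (∃ v, v ∈ e₁ ∧ v ∈ e₂) → c e₁ ≠ c e₂)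
    (v : V) (hv : (H.neighborSet v).ncard = d) (n : ℕ) (hn : n < d) :
    ∃ w, H.Adj v w ∧ c s(v, w) = n := by
  have key : (fun w => c s(v, w)) '' H.neighborSet v = Set.Iio d := by
    apply Set.eq_of_subset_of_ncard_le _ _ (Set.finite_Iio _)
    · rintro _ ⟨w, hw, rfl⟩
      exact h1 _ (by simpa using hw)
    · rw [Set.ncard_image_of_injOn (sub_injOn H.edgeSet c h2 v _ (fun w hw => by simpa using hw)),
        hv, Set.ncard_eq_toFinset_card']
      simp
  have : n ∈ (fun w => c s(v, w)) '' H.neighborSet v := by rw [key]; exact hn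
  obtain ⟨w, hw, rfl⟩ := this
  exact ⟨w, hw, rfl⟩

/-- `š(G) = 2` iff `G` is a non-regular graph which is the union of two edge-disjoint
regular Class 1 graphs `H₁`, `H₂` with `V(H₁) ⊆ V(H₂) = V(G)`: here `Hᵢ` is `dᵢ`-regular,
and being Class 1 (`χ'(Hᵢ) = Δ(Hᵢ) = dᵢ`) is expressed as admitting a proper edge
coloring with `dᵢ` colors. -/
theorem palette_index_eq_two_iff {V : Type*} [Fintype V]
    (G : SimpleGraph V) [DecidableRel G.Adj] :
    paletteIndex G = 2 ↔
      ((¬ ∃ d : ℕ, ∀ v : V, G.degree v = d) ∧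
        ∃ (H₁ H₂ : G.Subgraph) (d₁ d₂ : ℕ),
          H₁.verts ⊆ H₂.verts ∧ H₂.verts = Set.univ ∧
          Disjoint H₁.edgeSet H₂.edgeSet ∧
          H₁.edgeSet ∪ H₂.edgeSet = G.edgeSet ∧
          (∀ v ∈ H₁.verts, (H₁.neighborSet v).ncard = d₁) ∧
          (∀ v ∈ H₂.verts, (H₂.neighborSet v).ncard = d₂) ∧
          (∃ c : Sym2 V → ℕ, (∀ e ∈ H₁.edgeSet, c e < d₁) ∧
            ∀ e₁ ∈ H₁.edgeSet, ∀ e₂ ∈ H₁.edgeSet,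
              e₁ ≠ e₂ → (∃ v, v ∈ e₁ ∧ v ∈ e₂) → c e₁ ≠ c e₂) ∧
          (∃ c : Sym2 V → ℕ, (∀ e ∈ H₂.edgeSet, c e < d₂) ∧
            ∀ e₁ ∈ H₂.edgeSet, ∀ e₂ ∈ H₂.edgeSet,
              e₁ ≠ e₂ → (∃ v, v ∈ e₁ ∧ v ∈ e₂) → c e₁ ≠ c e₂)) := by
  classical
  constructor
  · intro h2
    have hmem : paletteIndex G ∈ {k | ∃ c : Sym2 V → ℕ, IsProperEdgeColoring G c ∧
        (Set.range (palette G c)).ncard = k} := by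
      apply Nat.sInf_mem
      apply Nat.nonempty_of_pos_sInf
      change 0 < paletteIndex G
      omega
    rw [h2] at hmem
    obtain ⟨c₀, hc₀, hr₀⟩ := hmem
    obtain ⟨c, A, B, a, b, hc, hAB, ha, hb, hall⟩ := recolor_graph G c₀ hc₀ hr₀
    have hAf : A.Finite := ha ▸ pal_finite G c a
    have hBf : B.Finite := hb ▸ pal_finite G c b
    refine ⟨?_, ?_⟩
    · rintro ⟨d, hd⟩
      have e1 := pal_ncard G c hc a
      have e2 := pal_ncard G c hc b
      rw [ha, hd] at e1
      rw [hb, hd] at e2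
      have hE : A = B := Set.eq_of_subset_of_ncard_le hAB (by omega) hBf
      have hr : Set.range (palette G c) ⊆ {B} := by
        rintro _ ⟨v, rfl⟩
        rcases hall v with h | h <;> rw [h]
        · simp [hE]
        · simp
      have h3 : paletteIndex G ≤ (Set.range (palette G c)).ncard := Nat.sInf_le ⟨c, hc, rfl⟩
      have h4 := Set.ncard_le_ncard hr
      rw [Set.ncard_singleton] at h4
      omega
    · have hAall : ∀ v, A ⊆ palette G c v := by
        intro v
        rcases hall v with h | h <;> rw [h]
        exact hAB
      refine ⟨colSub G c (B \ A) {v | palette G c v = B} ?_,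
        colSub G c A Set.univ (fun _ _ _ _ => Set.mem_univ _), (B \ A).ncard, A.ncard,
        Set.subset_univ _, rfl, ?_, ?_, ?_, ?_, ?_, ?_⟩
      · intro u v huv hm
        rcases hall u with h | h
        · exfalso
          apply hm.2
          rw [← h, pal_mem]
          exact ⟨v, huv, rfl⟩
        · exact h
      · rw [Set.disjoint_left]
        intro e h1 h3
        rw [colSub_edge] at h1 h3
        exact h1.2.2 h3.2
      · ext e
        rw [Set.mem_union, colSub_edge, colSub_edge]
        constructor
        · rintro (h | h) <;> exact h.1
        · intro he
          by_cases hA : c e ∈ A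
          · exact Or.inr ⟨he, hA⟩
          · refine Or.inl ⟨he, ?_, hA⟩
            induction e with
            | _ u v =>
              have hm : c s(u, v) ∈ palette G c u := ⟨_, he, by simp, rfl⟩
              rcases hall u with h | h <;> rw [h] at hm
              · exact hAB hm
              · exact hm
      · intro v hv
        apply colSub_deg _ _ _ _ _ hc
        rw [show palette G c v = B from hv]
        exact Set.diff_subset
      · intro v _
        exact colSub_deg _ _ _ _ _ hc _ (hAall v)
      · exact colSub_col _ _ _ _ _ hc hBf.diff
      · exact colSub_col _ _ _ _ _ hc hAf
  · rintro ⟨hnr, H₁, H₂, d₁, d₂, -, hV, hdis, hun, r₁, r₂, ⟨c₁, l₁, p₁⟩, ⟨c₂, l₂, p₂⟩⟩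
    set c : Sym2 V → ℕ := fun e => if e ∈ H₁.edgeSet then c₁ e else d₁ + c₂ e with hcdef
    have cH1 : ∀ e ∈ H₁.edgeSet, c e = c₁ e := fun e he => by simp only [hcdef, if_pos he]
    have cH2 : ∀ e ∈ H₂.edgeSet, c e = d₁ + c₂ e := fun e he => by
      simp only [hcdef, if_neg (Set.disjoint_right.1 hdis he)]
    have hsplit : ∀ e ∈ G.edgeSet, e ∈ H₁.edgeSet ∨ e ∈ H₂.edgeSet := by
      intro e he
      rw [← hun] at he
      exact he
    have hc : IsProperEdgeColoring G c := by
      intro e₁ h1 e₂ h2 hne hv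
      rcases hsplit e₁ h1 with h1 | h1 <;> rcases hsplit e₂ h2 with h2 | h2
      · rw [cH1 _ h1, cH1 _ h2]
        exact p₁ _ h1 _ h2 hne hv
      · rw [cH1 _ h1, cH2 _ h2]
        have := l₁ _ h1
        omega
      · rw [cH2 _ h1, cH1 _ h2]
        have := l₁ _ h2
        omega
      · rw [cH2 _ h1, cH2 _ h2]
        have := p₂ _ h1 _ h2 hne hv
        omega
    have q2 : ∀ v n, (d₁ ≤ n ∧ n < d₁ + d₂) → n ∈ palette G c v := by
      rintro v n ⟨hn1, hn2⟩
      obtain ⟨w, hw, hcw⟩ := full_image G H₂ d₂ c₂ l₂ p₂ v (r₂ v (by rw [hV]; trivial)) (n - d₁)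
        (by omega)
      rw [pal_mem]
      refine ⟨w, hw.adj_sub, ?_⟩
      rw [cH2 _ (by simpa using hw), hcw]
      omega
    have q1 : ∀ v ∈ H₁.verts, ∀ n, n < d₁ → n ∈ palette G c v := by
      intro v hv n hn
      obtain ⟨w, hw, hcw⟩ := full_image G H₁ d₁ c₁ l₁ p₁ v (r₁ v hv) n hn
      rw [pal_mem]
      exact ⟨w, hw.adj_sub, by rw [cH1 _ (by simpa using hw), hcw]⟩
    have q3 : ∀ v, ∀ n ∈ palette G c v, (n < d₁ ∧ v ∈ H₁.verts) ∨ (d₁ ≤ n ∧ n < d₁ + d₂) := by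
      intro v n hn
      obtain ⟨w, hw, rfl⟩ := (pal_mem G c v n).1 hn
      rcases hsplit s(v, w) (by simpa using hw) with h | h
      · left
        rw [cH1 _ h]
        exact ⟨l₁ _ h, H₁.edge_vert (by simpa using h)⟩
      · right
        rw [cH2 _ h]
        have := l₂ _ h
        omega
    have hr : Set.range (palette G c) ⊆ {Set.Iio (d₁ + d₂), Set.Ico d₁ (d₁ + d₂)} := by
      rintro _ ⟨v, rfl⟩
      by_cases hv : v ∈ H₁.verts
      · left
        ext n
        constructor
        · intro hn
          have := q3 v n hn
          simp only [Set.mem_Iio]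
          omega
        · intro hn
          simp only [Set.mem_Iio] at hn
          by_cases h : n < d₁
          · exact q1 v hv n h
          · exact q2 v n (by omega)
      · right
        ext n
        constructor
        · intro hn
          rcases q3 v n hn with h | h
          · exact absurd h.2 hv
          · exact h
        · intro hn
          exact q2 v n hn
    have hle : (Set.range (palette G c)).ncard ≤ 2 :=
      (Set.ncard_le_ncard hr (Set.toFinite _)).trans ((Set.ncard_insert_le _ _).trans (by rw [Set.ncard_singleton]))
    have hle2 : paletteIndex G ≤ 2 := le_trans (Nat.sInf_le ⟨c, hc, rfl⟩) hle
    have hmem : paletteIndex G ∈ {k | ∃ c : Sym2 V → ℕ, IsProperEdgeColoring G c ∧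
        (Set.range (palette G c)).ncard = k} := Nat.sInf_mem ⟨_, c, hc, rfl⟩
    obtain ⟨c', hc', hk⟩ := hmem
    by_contra hne
    apply hnr
    have h1 : (Set.range (palette G c')).ncard ≤ 1 := by omega
    rw [Set.ncard_le_one (Set.finite_range _)] at h1
    rcases isEmpty_or_nonempty V with hE | ⟨⟨x⟩⟩
    · exact ⟨0, fun v => hE.elim v⟩
    · refine ⟨G.degree x, fun v => ?_⟩
      rw [← pal_ncard G c' hc', ← pal_ncard G c' hc', h1 _ ⟨v, rfl⟩ _ ⟨x, rfl⟩]
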